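/- Let Ω ⊆ ℝ³ be open with topological boundary ∂Ω, let ρ₀, c₀, φ₀ : ℝ³ → ℝ with ρ₀ and c₀ differentiable and strictly positive on Ω ∪ ∂Ω, φ₀ differentiable, and let ω > 0, γ ≥ 0 be real and f : ℝ³ → ℂ. Let ξ : ℝ³ → ℂ³ and δp : ℝ³ → ℂ be differentiable on Ω, and set u_c := c₀ √ρ₀ ξ and w_c := δp/(c₀ √ρ₀). Then the following are equivalent: (a) at every x ∈ Ω, ρ₀ [ (−ω² − 2iωγ) ξ + ((α_ρ − ∇φ₀/c₀²)·ξ) ∇φ₀ ] + (δp/c₀²) ∇φ₀ + ∇δp = 0 and δp/(ρ₀ c₀²) − (ξ·∇φ₀)/c₀² + div ξ = f, and at every x ∈ ∂Ω, δp − ρ₀ (ξ·∇φ₀) = 0; (b) at every x ∈ Ω, ((−ω² − 2iωγ)/c₀²) u_c + (1/c₀²) ((α_ρ − ∇φ₀/c₀²)·u_c) ∇φ₀ + (∇φ₀/c₀² − α_ρ/2 − α_c) w_c + ∇w_c = 0 and w_c + u_c·(−∇φ₀/c₀² + α_ρ/2 + α_c) + div u_c = c₀ √ρ₀ f, and at every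 x ∈ ∂Ω, w_c − u_c·∇φ₀/c₀² = 0. Here α_ρ = −∇ρ₀/ρ₀ and α_c = −∇c₀/c₀. -/

import Mathlib

/-- Gradient of a complex-valued function on ℝ³: vector of partial derivatives. -/
noncomputable def grad (g : (Fin 3 → ℝ) → ℂ) (x : Fin 3 → ℝ) : Fin 3 → ℂ :=
  fun i => fderiv ℝ g x (Pi.single i 1)

/-- Gradient of a real-valued function on ℝ³: vector of partial derivatives. -/
noncomputable def gradR (g : (Fin 3 → ℝ) → ℝ) (x : Fin 3 → ℝ) : Fin 3 → ℝ :=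
  fun i => fderiv ℝ g x (Pi.single i 1)

/-- Divergence of a ℂ³-valued field on ℝ³: sum of the partial derivatives of its components. -/
noncomputable def divC (u : (Fin 3 → ℝ) → Fin 3 → ℂ) (x : Fin 3 → ℝ) : ℂ :=
  ∑ i, fderiv ℝ (fun y => u y i) x (Pi.single i 1)

/-- Inverse scale-height vector `α_g = -∇g/g` of a positive scalar background function. -/
noncomputable def alphaOf (g : (Fin 3 → ℝ) → ℝ) (x : Fin 3 → ℝ) : Fin 3 → ℝ :=
  fun i => -(gradR g x i) / g x

/-! The weight `m = c₀ √ρ₀` has `-∇m/m = α_ρ/2 + α_c` and `m² = ρ₀ c₀²`. Since `u_c = m ξ` and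
`w_c = δp/m`, the product rule gives `div u_c = m (div ξ - (α_ρ/2 + α_c)·ξ)` and
`∇w_c = (∇δp + (α_ρ/2 + α_c) δp)/m`, so the zeroth-order terms of the Liouville-c system cancel
the derivatives of `m`. At every point its momentum equation and boundary condition are the original
ones divided by `m`, and its continuity equation is the original one multiplied by `m`.
-/

section PartialDerivatives

variable {ι F : Type*} [DecidableEq ι] [NormedAddCommGroup F] [NormedSpace ℝ F]

/-- The partial derivative `∂f/∂xᵢ` at `x` of a function on `ℝ^ι` with values in a normed space, so
that one notion covers the gradients of both real and complex functions. -/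
noncomputable def partialDeriv (f : (ι → ℝ) → F) (x : ι → ℝ) (i : ι) : F :=
  fderiv ℝ f x (Pi.single i 1)

/-- The inverse scale-height vector `α_g = -∇g/g`, i.e. minus the logarithmic gradient of `g`. -/
noncomputable def invScaleHeight (g : (ι → ℝ) → ℝ) (x : ι → ℝ) (i : ι) : ℝ :=
  -partialDeriv g x i / g x

variable {x : ι → ℝ}

lemma partialDeriv_smul_eq_smul_sub [Finite ι] {m : (ι → ℝ) → ℝ} {p : (ι → ℝ) → F}
    (hm : DifferentiableAt ℝ m x) (hm0 : m x ≠ 0) (hp : DifferentiableAt ℝ p x) (i : ι) :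
    partialDeriv (fun y => m y • p y) x i =
      m x • (partialDeriv p x i - invScaleHeight m x i • p x) := by
  have := Fintype.ofFinite ι
  have hα : m x * invScaleHeight m x i = -partialDeriv m x i := mul_div_cancel₀ _ hm0
  rw [smul_sub, smul_smul, hα, neg_smul, sub_neg_eq_add]
  simp only [partialDeriv, fderiv_fun_smul hm hp, add_apply, smul_apply,
    ContinuousLinearMap.smulRight_apply]

lemma invScaleHeight_mul [Finite ι] {a b : (ι → ℝ) → ℝ} (ha : DifferentiableAt ℝ a x)
    (ha0 : a x ≠ 0) (hb : DifferentiableAt ℝ b x) (hb0 : b x ≠ 0) (i : ι) :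
    invScaleHeight (fun y => a y * b y) x i = invScaleHeight a x i + invScaleHeight b x i := by
  have := Fintype.ofFinite ι
  simp only [invScaleHeight, partialDeriv, fderiv_fun_mul ha hb, add_apply, smul_apply,
    smul_eq_mul]
  field_simp
  ring

lemma invScaleHeight_inv [Finite ι] {a : (ι → ℝ) → ℝ} (ha : DifferentiableAt ℝ a x)
    (ha0 : a x ≠ 0) (i : ι) :
    invScaleHeight (fun y => (a y)⁻¹) x i = -invScaleHeight a x i := by
  have := Fintype.ofFinite ι
  have hinv : HasFDerivAt (fun y => (a y)⁻¹) (-(a x ^ 2)⁻¹ • fderiv ℝ a x) x :=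
    (hasDerivAt_inv ha0).comp_hasFDerivAt x ha.hasFDerivAt
  simp only [invScaleHeight, partialDeriv, hinv.fderiv, smul_apply, smul_eq_mul]
  field_simp

lemma invScaleHeight_sqrt [Finite ι] {a : (ι → ℝ) → ℝ} (ha : DifferentiableAt ℝ a x)
    (ha0 : 0 < a x) (i : ι) :
    invScaleHeight (fun y => √(a y)) x i = invScaleHeight a x i / 2 := by
  have := Fintype.ofFinite ι
  have hsq : √(a x) ^ 2 = a x := Real.sq_sqrt ha0.le
  simp only [invScaleHeight, partialDeriv, fderiv_sqrt ha ha0.ne', smul_apply, smul_eq_mul]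
  field_simp
  rw [hsq]
  ring

/-- The divergence of a vector field on `ℝ^ι` whose components lie in a normed space. -/
noncomputable def divergence [Fintype ι] (u : (ι → ℝ) → ι → F) (x : ι → ℝ) : F :=
  ∑ i, partialDeriv (fun y => u y i) x i

lemma divergence_smul_eq_smul_sub [Fintype ι] {m : (ι → ℝ) → ℝ} {u : (ι → ℝ) → ι → F}
    (hm : DifferentiableAt ℝ m x) (hm0 : m x ≠ 0) (hu : DifferentiableAt ℝ u x) :
    divergence (fun y => m y • u y) x =
      m x • (divergence u x - ∑ i, invScaleHeight m x i • u x i) := by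
  simp only [divergence, Pi.smul_apply, partialDeriv_smul_eq_smul_sub hm hm0
    (differentiableAt_pi.1 hu _), ← Finset.smul_sum, Finset.sum_sub_distrib]

end PartialDerivatives

section Weight

variable {ι : Type*} {ρ c : (ι → ℝ) → ℝ} {x : ι → ℝ}

/-- The weight `c √ρ` of the Liouville-`c` change of unknowns. -/
noncomputable def liouvilleWeight (ρ c : (ι → ℝ) → ℝ) (x : ι → ℝ) : ℝ :=
  c x * √(ρ x)

/-- The Liouville-`c` displacement `u_c = c √ρ ξ`. -/
noncomputable def liouvilleDisplacement (ρ c : (ι → ℝ) → ℝ) (ξ : (ι → ℝ) → ι → ℂ) (x : ι → ℝ)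
    (i : ι) : ℂ :=
  liouvilleWeight ρ c x * ξ x i

/-- The Liouville-`c` pressure `w_c = δp / (c √ρ)`. -/
noncomputable def liouvillePressure (ρ c : (ι → ℝ) → ℝ) (p : (ι → ℝ) → ℂ) (x : ι → ℝ) : ℂ :=
  p x / liouvilleWeight ρ c x

lemma liouvilleWeight_ne_zero (hρ : 0 < ρ x) (hc : c x ≠ 0) : liouvilleWeight ρ c x ≠ 0 :=
  mul_ne_zero hc (Real.sqrt_pos.2 hρ).ne'

lemma liouvilleWeight_sq (hρ : 0 ≤ ρ x) : liouvilleWeight ρ c x ^ 2 = c x ^ 2 * ρ x := by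
  rw [liouvilleWeight, mul_pow, Real.sq_sqrt hρ]

lemma liouvilleWeight_div_sq (hρ : 0 < ρ x) (hc : c x ≠ 0) :
    (liouvilleWeight ρ c x : ℂ) / (c x : ℂ) ^ 2 = ρ x / liouvilleWeight ρ c x := by
  have hm : liouvilleWeight ρ c x ≠ 0 := liouvilleWeight_ne_zero hρ hc
  have hreal : liouvilleWeight ρ c x / c x ^ 2 = ρ x / liouvilleWeight ρ c x := by
    rw [div_eq_div_iff (pow_ne_zero 2 hc) hm, ← sq, liouvilleWeight_sq hρ.le, mul_comm]
  exact_mod_cast hreal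

lemma sum_mul_liouvilleDisplacement [Fintype ι] (a : ι → ℂ) (ξ : (ι → ℝ) → ι → ℂ) :
    ∑ j, a j * liouvilleDisplacement ρ c ξ x j = liouvilleWeight ρ c x * ∑ j, a j * ξ x j := by
  simp only [liouvilleDisplacement, Finset.mul_sum, mul_left_comm]

lemma differentiableAt_liouvilleWeight [Finite ι] (hρd : DifferentiableAt ℝ ρ x) (hρ : 0 < ρ x)
    (hcd : DifferentiableAt ℝ c x) : DifferentiableAt ℝ (liouvilleWeight ρ c) x :=
  have := Fintype.ofFinite ι
  hcd.fun_mul (hρd.sqrt hρ.ne')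

variable [DecidableEq ι]

lemma invScaleHeight_liouvilleWeight [Finite ι] (hρd : DifferentiableAt ℝ ρ x) (hρ : 0 < ρ x)
    (hcd : DifferentiableAt ℝ c x) (hc : c x ≠ 0) (i : ι) :
    invScaleHeight (liouvilleWeight ρ c) x i = invScaleHeight ρ x i / 2 + invScaleHeight c x i :=
  have := Fintype.ofFinite ι
  calc invScaleHeight (liouvilleWeight ρ c) x i
      = invScaleHeight c x i + invScaleHeight (fun y => √(ρ y)) x i :=
        invScaleHeight_mul hcd hc (hρd.sqrt hρ.ne') (Real.sqrt_pos.2 hρ).ne' i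
    _ = invScaleHeight ρ x i / 2 + invScaleHeight c x i := by
        rw [invScaleHeight_sqrt hρd hρ, add_comm]

lemma divergence_liouvilleDisplacement [Fintype ι] {ξ : (ι → ℝ) → ι → ℂ}
    (hρd : DifferentiableAt ℝ ρ x) (hρ : 0 < ρ x) (hcd : DifferentiableAt ℝ c x) (hc : c x ≠ 0)
    (hξ : DifferentiableAt ℝ ξ x) :
    divergence (liouvilleDisplacement ρ c ξ) x = liouvilleWeight ρ c x *
      (divergence ξ x
        - ∑ j, ((invScaleHeight ρ x j / 2 + invScaleHeight c x j : ℝ) : ℂ) * ξ x j) := by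
  have hu : liouvilleDisplacement ρ c ξ = fun y => liouvilleWeight ρ c y • ξ y := rfl
  rw [hu, divergence_smul_eq_smul_sub (differentiableAt_liouvilleWeight hρd hρ hcd)
    (liouvilleWeight_ne_zero hρ hc) hξ]
  simp only [invScaleHeight_liouvilleWeight hρd hρ hcd hc, Complex.real_smul]

lemma partialDeriv_liouvillePressure [Finite ι] {p : (ι → ℝ) → ℂ} (hρd : DifferentiableAt ℝ ρ x)
    (hρ : 0 < ρ x) (hcd : DifferentiableAt ℝ c x) (hc : c x ≠ 0) (hp : DifferentiableAt ℝ p x)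
    (i : ι) :
    partialDeriv (liouvillePressure ρ c p) x i =
      (partialDeriv p x i + ((invScaleHeight ρ x i / 2 + invScaleHeight c x i : ℝ) : ℂ) * p x) /
        liouvilleWeight ρ c x := by
  have := Fintype.ofFinite ι
  have hm : DifferentiableAt ℝ (liouvilleWeight ρ c) x :=
    differentiableAt_liouvilleWeight hρd hρ hcd
  have hm0 : liouvilleWeight ρ c x ≠ 0 := liouvilleWeight_ne_zero hρ hc
  have hw : liouvillePressure ρ c p = fun y => (liouvilleWeight ρ c y)⁻¹ • p y := by
    funext y
    rw [liouvillePressure, div_eq_inv_mul, Complex.real_smul, Complex.ofReal_inv]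
  rw [hw, partialDeriv_smul_eq_smul_sub (hm.fun_inv hm0) (inv_ne_zero hm0) hp,
    invScaleHeight_inv hm hm0, invScaleHeight_liouvilleWeight hρd hρ hcd hc, neg_smul,
    sub_neg_eq_add, Complex.real_smul, Complex.real_smul, Complex.ofReal_inv, ← div_eq_inv_mul]

end Weight

section Systems

variable {ι : Type*} [Fintype ι]

/-- The Lagrangian pressure perturbation `p - ρ ξ·g`, with `g` standing for `∇φ₀`. -/
noncomputable def lagrangianPressure (ρ : (ι → ℝ) → ℝ) (g : (ι → ℝ) → ι → ℝ)
    (ξ : (ι → ℝ) → ι → ℂ) (p : (ι → ℝ) → ℂ) (x : ι → ℝ) : ℂ :=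
  p x - (ρ x : ℂ) * ∑ j, (g x j : ℂ) * ξ x j

/-- The vacuum boundary expression `w - u·g/c²` of the Liouville-`c` unknowns, with `g` standing for
`∇φ₀`. -/
noncomputable def liouvilleLagrangianPressure (c : (ι → ℝ) → ℝ) (g : (ι → ℝ) → ι → ℝ)
    (u : (ι → ℝ) → ι → ℂ) (w : (ι → ℝ) → ℂ) (x : ι → ℝ) : ℂ :=
  w x - ∑ j, ((g x j / c x ^ 2 : ℝ) : ℂ) * u x j

variable {ρ c : (ι → ℝ) → ℝ} {g : (ι → ℝ) → ι → ℝ} {ξ : (ι → ℝ) → ι → ℂ} {p : (ι → ℝ) → ℂ}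
  {x : ι → ℝ}

lemma sum_ofReal_div_mul (a : ι → ℝ) (r : ℝ) (v : ι → ℂ) :
    ∑ j, ((a j / r : ℝ) : ℂ) * v j = (∑ j, (a j : ℂ) * v j) / r := by
  simp only [Complex.ofReal_div, Finset.sum_div, div_mul_eq_mul_div]

lemma liouvilleLagrangianPressure_eq (hρ : 0 < ρ x) (hc : c x ≠ 0) :
    liouvilleLagrangianPressure c g (liouvilleDisplacement ρ c ξ) (liouvillePressure ρ c p) x =
      lagrangianPressure ρ g ξ p x / liouvilleWeight ρ c x := by
  simp only [liouvilleLagrangianPressure, lagrangianPressure, liouvillePressure,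
    sum_mul_liouvilleDisplacement, sum_ofReal_div_mul, Complex.ofReal_pow]
  linear_combination -(∑ j, (g x j : ℂ) * ξ x j) * liouvilleWeight_div_sq hρ hc

variable [DecidableEq ι]

/-- The left-hand side of the momentum equation for the displacement `ξ` and the pressure
perturbation `p`, with `g` standing for `∇φ₀` and `σ` for `-ω² - 2iωγ`. -/
noncomputable def momentumLHS (ρ c : (ι → ℝ) → ℝ) (g : (ι → ℝ) → ι → ℝ) (σ : ℂ)
    (ξ : (ι → ℝ) → ι → ℂ) (p : (ι → ℝ) → ℂ) (x : ι → ℝ) (i : ι) : ℂ :=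
  (ρ x : ℂ) *
      (σ * ξ x i + (∑ j, ((invScaleHeight ρ x j - g x j / c x ^ 2 : ℝ) : ℂ) * ξ x j) * (g x i : ℂ))
    + p x / (c x : ℂ) ^ 2 * (g x i : ℂ) + partialDeriv p x i

/-- The left-hand side of the continuity equation for the displacement `ξ` and the pressure
perturbation `p`, with `g` standing for `∇φ₀`. -/
noncomputable def continuityLHS (ρ c : (ι → ℝ) → ℝ) (g : (ι → ℝ) → ι → ℝ)
    (ξ : (ι → ℝ) → ι → ℂ) (p : (ι → ℝ) → ℂ) (x : ι → ℝ) : ℂ :=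
  p x / ((ρ x : ℂ) * (c x : ℂ) ^ 2) - (∑ j, (g x j : ℂ) * ξ x j) / (c x : ℂ) ^ 2 + divergence ξ x

/-- The left-hand side of the Liouville-`c` momentum equation, with `g` standing for `∇φ₀` and `σ`
for `-ω² - 2iωγ`. -/
noncomputable def liouvilleMomentumLHS (ρ c : (ι → ℝ) → ℝ) (g : (ι → ℝ) → ι → ℝ) (σ : ℂ)
    (u : (ι → ℝ) → ι → ℂ) (w : (ι → ℝ) → ℂ) (x : ι → ℝ) (i : ι) : ℂ :=
  σ / (c x : ℂ) ^ 2 * u x i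
    + 1 / (c x : ℂ) ^ 2 * (∑ j, ((invScaleHeight ρ x j - g x j / c x ^ 2 : ℝ) : ℂ) * u x j)
      * (g x i : ℂ)
    + ((g x i / c x ^ 2 - invScaleHeight ρ x i / 2 - invScaleHeight c x i : ℝ) : ℂ) * w x
    + partialDeriv w x i

/-- The left-hand side of the Liouville-`c` continuity equation, with `g` standing for `∇φ₀`. -/
noncomputable def liouvilleContinuityLHS (ρ c : (ι → ℝ) → ℝ) (g : (ι → ℝ) → ι → ℝ)
    (u : (ι → ℝ) → ι → ℂ) (w : (ι → ℝ) → ℂ) (x : ι → ℝ) : ℂ :=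
  w x
    + (∑ j, ((-g x j / c x ^ 2 + invScaleHeight ρ x j / 2 + invScaleHeight c x j : ℝ) : ℂ) * u x j)
    + divergence u x

lemma liouvilleMomentumLHS_eq {σ : ℂ} (hρd : DifferentiableAt ℝ ρ x) (hρ : 0 < ρ x)
    (hcd : DifferentiableAt ℝ c x) (hc : c x ≠ 0) (hp : DifferentiableAt ℝ p x) (i : ι) :
    liouvilleMomentumLHS ρ c g σ (liouvilleDisplacement ρ c ξ) (liouvillePressure ρ c p) x i =
      momentumLHS ρ c g σ ξ p x i / liouvilleWeight ρ c x := by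
  simp only [liouvilleMomentumLHS, momentumLHS, sum_mul_liouvilleDisplacement,
    partialDeriv_liouvillePressure hρd hρ hcd hc hp]
  set S := ∑ j, ((invScaleHeight ρ x j - g x j / c x ^ 2 : ℝ) : ℂ) * ξ x j
  simp only [liouvilleDisplacement, liouvillePressure]
  push_cast
  linear_combination (σ * ξ x i + S * g x i) * liouvilleWeight_div_sq hρ hc

lemma liouvilleContinuityLHS_eq (hρd : DifferentiableAt ℝ ρ x) (hρ : 0 < ρ x)
    (hcd : DifferentiableAt ℝ c x) (hc : c x ≠ 0) (hξ : DifferentiableAt ℝ ξ x) :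
    liouvilleContinuityLHS ρ c g (liouvilleDisplacement ρ c ξ) (liouvillePressure ρ c p) x =
      liouvilleWeight ρ c x * continuityLHS ρ c g ξ p x := by
  have hsum : ∑ j, ((-g x j / c x ^ 2 + invScaleHeight ρ x j / 2 + invScaleHeight c x j : ℝ) : ℂ)
        * ξ x j =
      ∑ j, ((invScaleHeight ρ x j / 2 + invScaleHeight c x j : ℝ) : ℂ) * ξ x j
        - (∑ j, (g x j : ℂ) * ξ x j) / (c x : ℂ) ^ 2 := by
    rw [← Complex.ofReal_pow, ← sum_ofReal_div_mul, ← Finset.sum_sub_distrib]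
    refine Finset.sum_congr rfl fun j _ => ?_
    push_cast
    ring
  have hw : p x / liouvilleWeight ρ c x =
      liouvilleWeight ρ c x * (p x / ((ρ x : ℂ) * (c x : ℂ) ^ 2)) := by
    have hρ0 : (ρ x : ℂ) ≠ 0 := Complex.ofReal_ne_zero.2 hρ.ne'
    calc p x / liouvilleWeight ρ c x
        = p x / ρ x * (ρ x / liouvilleWeight ρ c x) := (div_mul_div_cancel₀ hρ0).symm
      _ = liouvilleWeight ρ c x * (p x / ((ρ x : ℂ) * (c x : ℂ) ^ 2)) := by
          rw [← liouvilleWeight_div_sq hρ hc]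
          ring
  rw [liouvilleContinuityLHS, continuityLHS, sum_mul_liouvilleDisplacement,
    divergence_liouvilleDisplacement hρd hρ hcd hc hξ, hsum, liouvillePressure, hw]
  ring

theorem stmt6_general {Ω Γ : Set (ι → ℝ)}
    (hρdiff : ∀ x ∈ Ω, DifferentiableAt ℝ ρ x) (hρpos : ∀ x ∈ Ω ∪ Γ, 0 < ρ x)
    (hcdiff : ∀ x ∈ Ω, DifferentiableAt ℝ c x) (hc0 : ∀ x ∈ Ω ∪ Γ, c x ≠ 0)
    (hξ : ∀ x ∈ Ω, DifferentiableAt ℝ ξ x) (hp : ∀ x ∈ Ω, DifferentiableAt ℝ p x)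
    (g : (ι → ℝ) → ι → ℝ) (σ : ℂ) (f : (ι → ℝ) → ℂ) :
    ((∀ x ∈ Ω, (∀ i, momentumLHS ρ c g σ ξ p x i = 0) ∧ continuityLHS ρ c g ξ p x = f x) ∧
        ∀ x ∈ Γ, lagrangianPressure ρ g ξ p x = 0) ↔
      ((∀ x ∈ Ω,
          (∀ i, liouvilleMomentumLHS ρ c g σ (liouvilleDisplacement ρ c ξ)
            (liouvillePressure ρ c p) x i = 0) ∧
          liouvilleContinuityLHS ρ c g (liouvilleDisplacement ρ c ξ)
            (liouvillePressure ρ c p) x = liouvilleWeight ρ c x * f x) ∧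
        ∀ x ∈ Γ, liouvilleLagrangianPressure c g (liouvilleDisplacement ρ c ξ)
          (liouvillePressure ρ c p) x = 0) := by
  have hm0 : ∀ x ∈ Ω ∪ Γ, (liouvilleWeight ρ c x : ℂ) ≠ 0 := fun x hx =>
    Complex.ofReal_ne_zero.2 (liouvilleWeight_ne_zero (hρpos x hx) (hc0 x hx))
  refine and_congr (forall₂_congr fun x hx => and_congr (forall_congr' fun i => ?_) ?_)
    (forall₂_congr fun x hx => ?_)
  · have hx' : x ∈ Ω ∪ Γ := Or.inl hx
    rw [liouvilleMomentumLHS_eq (hρdiff x hx) (hρpos x hx') (hcdiff x hx) (hc0 x hx') (hp x hx),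
      div_eq_zero_iff, or_iff_left (hm0 x hx')]
  · have hx' : x ∈ Ω ∪ Γ := Or.inl hx
    rw [liouvilleContinuityLHS_eq (hρdiff x hx) (hρpos x hx') (hcdiff x hx) (hc0 x hx') (hξ x hx),
      mul_right_inj' (hm0 x hx')]
  · have hx' : x ∈ Ω ∪ Γ := Or.inr hx
    rw [liouvilleLagrangianPressure_eq (hρpos x hx') (hc0 x hx'), div_eq_zero_iff,
      or_iff_left (hm0 x hx')]

end Systems

theorem stmt6 (Ω : Set (Fin 3 → ℝ)) (hΩ : IsOpen Ω)
    (ρ₀ c₀ φ₀ : (Fin 3 → ℝ) → ℝ)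
    (hρdiff : ∀ x ∈ Ω ∪ frontier Ω, DifferentiableAt ℝ ρ₀ x)
    (hρpos : ∀ x ∈ Ω ∪ frontier Ω, 0 < ρ₀ x)
    (hcdiff : ∀ x ∈ Ω ∪ frontier Ω, DifferentiableAt ℝ c₀ x)
    (hcpos : ∀ x ∈ Ω ∪ frontier Ω, 0 < c₀ x)
    (hφ : Differentiable ℝ φ₀)
    (ω γ : ℝ) (hω : 0 < ω) (hγ : 0 ≤ γ)
    (f : (Fin 3 → ℝ) → ℂ)
    (ξ : (Fin 3 → ℝ) → Fin 3 → ℂ) (δp : (Fin 3 → ℝ) → ℂ)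
    (hξ : ∀ x ∈ Ω, DifferentiableAt ℝ ξ x)
    (hδp : ∀ x ∈ Ω, DifferentiableAt ℝ δp x)
    (uc : (Fin 3 → ℝ) → Fin 3 → ℂ) (wc : (Fin 3 → ℝ) → ℂ)
    (huc : uc = fun y => fun i => ((c₀ y * Real.sqrt (ρ₀ y) : ℝ) : ℂ) * ξ y i)
    (hwc : wc = fun y => δp y / ((c₀ y * Real.sqrt (ρ₀ y) : ℝ) : ℂ)) :
    -- (a) original system with vacuum boundary condition
    ( (∀ x ∈ Ω,
        (∀ i, (ρ₀ x : ℂ) *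
            ( (-(ω : ℂ) ^ 2 - 2 * Complex.I * ω * γ) * ξ x i
              + (∑ j, ((alphaOf ρ₀ x j - gradR φ₀ x j / (c₀ x) ^ 2 : ℝ) : ℂ) * ξ x j)
                  * (gradR φ₀ x i : ℂ) )
          + (δp x / ((c₀ x) ^ 2 : ℂ)) * (gradR φ₀ x i : ℂ)
          + grad δp x i = 0)
        ∧ δp x / ((ρ₀ x : ℂ) * ((c₀ x) ^ 2 : ℂ))
            - (∑ j, (gradR φ₀ x j : ℂ) * ξ x j) / ((c₀ x) ^ 2 : ℂ)
            + divC ξ x = f x)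
      ∧ (∀ x ∈ frontier Ω,
          δp x - (ρ₀ x : ℂ) * ∑ j, (gradR φ₀ x j : ℂ) * ξ x j = 0) )
    ↔
    -- (b) Liouville-c system with its boundary condition
    ( (∀ x ∈ Ω,
        (∀ i, ((-(ω : ℂ) ^ 2 - 2 * Complex.I * ω * γ) / ((c₀ x) ^ 2 : ℂ)) * uc x i
          + (1 / ((c₀ x) ^ 2 : ℂ))
              * (∑ j, ((alphaOf ρ₀ x j - gradR φ₀ x j / (c₀ x) ^ 2 : ℝ) : ℂ) * uc x j)
              * (gradR φ₀ x i : ℂ)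
          + ((gradR φ₀ x i / (c₀ x) ^ 2 - alphaOf ρ₀ x i / 2 - alphaOf c₀ x i : ℝ) : ℂ) * wc x
          + grad wc x i = 0)
        ∧ wc x
            + (∑ j, ((-(gradR φ₀ x j) / (c₀ x) ^ 2 + alphaOf ρ₀ x j / 2
                        + alphaOf c₀ x j : ℝ) : ℂ) * uc x j)
            + divC uc x = ((c₀ x * Real.sqrt (ρ₀ x) : ℝ) : ℂ) * f x)
      ∧ (∀ x ∈ frontier Ω,
          wc x - ∑ j, ((gradR φ₀ x j / (c₀ x) ^ 2 : ℝ) : ℂ) * uc x j = 0) ) := by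
  subst huc hwc
  exact stmt6_general (fun x hx => hρdiff x (.inl hx)) hρpos (fun x hx => hcdiff x (.inl hx))
    (fun x hx => (hcpos x hx).ne') hξ hδp (gradR φ₀) _ f
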